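/- The matrix 𝒮 is an involution: for all a,b,c,i,j,k ∈ ℕ, Σ_{x,y,z∈ℕ} 𝒮^{abc}_{xyz} 𝒮^{xyz}_{ijk} = δ_{a,i} δ_{b,j} δ_{c,k} (the sum is finite since 𝒮^{abc}_{xyz} = 0 unless x+y = a+b and y+z = b+c). -/

import Mathlib

open TensorProduct

noncomputable section

abbrev Fq : Type := RatFunc ℚ

def q : Fq := RatFunc.X

abbrev F : Type := ℕ →₀ Fq

def ket (m : ℕ) : F := Finsupp.single m 1

/-- Linear operator on the Fock space from its action on the basis. -/
def opOf (v : ℕ → F) : F →ₗ[Fq] F := Finsupp.lift F Fq ℕ v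

/-- q²-oscillator K -/
def K2 : F →ₗ[Fq] F := opOf fun m => q ^ (2 * m) • ket m
/-- q²-oscillator A⁺ -/
def Ap : F →ₗ[Fq] F := opOf fun m => ket (m + 1)
/-- q²-oscillator A⁻ -/
def Am : F →ₗ[Fq] F := opOf fun m => (1 - q ^ (4 * m)) • ket (m - 1)
/-- q-oscillator k -/
def kk : F →ₗ[Fq] F := opOf fun m => q ^ m • ket m
/-- q-oscillator a⁺ -/
def ap : F →ₗ[Fq] F := opOf fun m => ket (m + 1)
/-- q-oscillator a⁻ -/
def am : F →ₗ[Fq] F := opOf fun m => (1 - q ^ (2 * m)) • ket (m - 1)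

def pi1 (α β μ ν κ σ : Fq) : Matrix (Fin 7) (Fin 7) (F →ₗ[Fq] F) :=
  !![μ • Am, α • K2, 0, 0, 0, 0, 0;
     β • K2, ν • Ap, 0, 0, 0, 0, 0;
     0, 0, κ • LinearMap.id, 0, 0, 0, 0;
     0, 0, 0, σ • LinearMap.id, 0, 0, 0;
     0, 0, 0, 0, κ⁻¹ • LinearMap.id, 0, 0;
     0, 0, 0, 0, 0, ν⁻¹ • Am, (q ^ 2 * β⁻¹) • K2;
     0, 0, 0, 0, 0, (q ^ 2 * α⁻¹) • K2, μ⁻¹ • Ap]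

def pi2 (α β μ ν κ σ : Fq) : Matrix (Fin 7) (Fin 7) (F →ₗ[Fq] F) :=
  !![κ • LinearMap.id, 0, 0, 0, 0, 0, 0;
     0, μ • Am, α • K2, 0, 0, 0, 0;
     0, β • K2, ν • Ap, 0, 0, 0, 0;
     0, 0, 0, σ • LinearMap.id, 0, 0, 0;
     0, 0, 0, 0, ν⁻¹ • Am, (q ^ 2 * β⁻¹) • K2, 0;
     0, 0, 0, 0, (q ^ 2 * α⁻¹) • K2, μ⁻¹ • Ap, 0;
     0, 0, 0, 0, 0, 0, κ⁻¹ • LinearMap.id]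

def pi3 (α μ κa κb : Fq) : Matrix (Fin 7) (Fin 7) (F →ₗ[Fq] F) :=
  !![κa • LinearMap.id, 0, 0, 0, 0, 0, 0;
     0, κb • LinearMap.id, 0, 0, 0, 0, 0;
     0, 0, μ • (am ∘ₗ am), α • (kk ∘ₗ am), (-((1 + q ^ 2) * μ)⁻¹ * α ^ 2) • (kk ∘ₗ kk), 0, 0;
     0, 0, (-(1 + q ^ 2) * α⁻¹ * μ) • (am ∘ₗ kk), am ∘ₗ ap - kk ∘ₗ kk, (-(q * μ)⁻¹ * α) • (kk ∘ₗ ap), 0, 0;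
     0, 0, (-(1 + q ^ 2) * q ^ 2 * α⁻¹ ^ 2 * μ) • (kk ∘ₗ kk), ((1 + q ^ 2) * α⁻¹) • (kk ∘ₗ ap), μ⁻¹ • (ap ∘ₗ ap), 0, 0;
     0, 0, 0, 0, 0, κb⁻¹ • LinearMap.id, 0;
     0, 0, 0, 0, 0, 0, κa⁻¹ • LinearMap.id]

def rhoB : Fin 7 → ℤ := ![5, 3, 1, 0, -1, -3, -5]

def CB : Matrix (Fin 7) (Fin 7) Fq := fun i j => if (i : ℕ) + (j : ℕ) = 6 then q ^ rhoB j else 0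

/-- `(p)_n` for an integer `n`: `∏_{l=1}^{n}(1-p^l)` if `n ≥ 0`, and `0` if `n < 0`
(the latter convention makes the q-multinomial bracket below vanish, via multiplication
for a numerator index and via division by zero for a denominator index, whenever some
index is negative, as required). -/
def qfac (p : Fq) (n : ℤ) : Fq :=
  if 0 ≤ n then ∏ l ∈ Finset.range n.toNat, (1 - p ^ (l + 1)) else 0

/-- The matrix element 𝒮^{abc}_{ijk} (with λ = b - μ in the sum over λ + μ = b). -/
def Scoef (a b c i j k : ℕ) : Fq :=
  (if i + j = a + b then 1 else 0) * (if j + k = b + c then 1 else 0) *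
    ∑ μ ∈ Finset.range (b + 1),
      (-1 : Fq) ^ (b - μ) *
        q ^ (2 * (i : ℤ) * ((c : ℤ) - (j : ℤ)) + 2 * ((k : ℤ) + 1) * ((b : ℤ) - (μ : ℤ))
          + 2 * (μ : ℤ) * ((μ : ℤ) - (k : ℤ))) *
        ((qfac (q ^ 4) (i : ℤ) * qfac (q ^ 4) (j : ℤ) * qfac (q ^ 4) ((c : ℤ) + (μ : ℤ))) /
          (qfac (q ^ 4) (μ : ℤ) * qfac (q ^ 4) ((b : ℤ) - (μ : ℤ)) *
            qfac (q ^ 4) ((i : ℤ) - (μ : ℤ)) * qfac (q ^ 4) ((j : ℤ) - ((b : ℤ) - (μ : ℤ))) *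
            qfac (q ^ 4) (c : ℤ)))


lemma q_ne : q ≠ 0 := RatFunc.X_ne_zero

lemma q_pow_ne (n : ℕ) (hn : n ≠ 0) : q ^ n ≠ 1 := by
  intro h
  unfold q at h
  rw [← RatFunc.algebraMap_X, ← map_pow, ← map_one (algebraMap (Polynomial ℚ) (RatFunc ℚ))] at h
  have h2 := RatFunc.algebraMap_injective ℚ h
  have := congrArg Polynomial.natDegree h2
  simp at this
  exact hn this

/-- the q-factorial in base `q^4` -/
def qf (n : ℤ) : Fq := qfac (q ^ 4) n

lemma qf_zero : qf 0 = 1 := by simp [qf, qfac]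

lemma qf_neg {n : ℤ} (h : n < 0) : qf n = 0 := by simp [qf, qfac, h]

lemma qf_succ {n : ℤ} (h : 0 ≤ n) : qf (n + 1) = (1 - q ^ (4 * (n + 1))) * qf n := by
  obtain ⟨m, rfl⟩ := Int.eq_ofNat_of_zero_le h
  have h1 : ((m : ℤ) + 1).toNat = m + 1 := by omega
  have h2 : (0 : ℤ) ≤ (m : ℤ) + 1 := by omega
  have h3 : q ^ (4 * ((m : ℤ) + 1)) = (q ^ 4) ^ (m + 1) := by
    rw [← pow_mul, ← zpow_natCast]; push_cast; rfl
  simp only [qf, qfac, h1, h2, h, if_true, Int.toNat_natCast, Finset.prod_range_succ, h3]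
  ring

lemma one_sub_ne {n : ℤ} (h : 0 < n) : 1 - q ^ (4 * n) ≠ 0 := by
  obtain ⟨m, rfl⟩ := Int.eq_ofNat_of_zero_le h.le
  have h3 : q ^ (4 * (m : ℤ)) = q ^ (4 * m) := by
    rw [← zpow_natCast]; push_cast; rfl
  rw [h3]
  intro h0
  exact q_pow_ne (4 * m) (by omega) (sub_eq_zero.mp h0).symm

/-- the reciprocal q-factorial, zero at negative integers -/
def qg (n : ℤ) : Fq := (qf n)⁻¹

lemma qg_zero : qg 0 = 1 := by simp [qg, qf_zero]

lemma qg_neg {n : ℤ} (h : n < 0) : qg n = 0 := by simp [qg, qf_neg h]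

lemma qg_pred (n : ℤ) : qg (n - 1) = (1 - q ^ (4 * n)) * qg n := by
  rcases lt_trichotomy n 0 with h | rfl | h
  · rw [qg_neg h, qg_neg (by omega)]; simp
  · rw [qg_neg (by omega)]; simp
  · have := qf_succ (n := n - 1) (by omega)
    rw [sub_add_cancel] at this
    have h1 := one_sub_ne h
    rw [qg, qg, this, mul_inv, ← mul_assoc, mul_inv_cancel₀ h1, one_mul]

lemma qf_ne {n : ℤ} (h : 0 ≤ n) : qf n ≠ 0 := by
  obtain ⟨m, rfl⟩ := Int.eq_ofNat_of_zero_le h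
  induction m with
  | zero => simp [qf_zero]
  | succ m ih =>
    push_cast
    rw [qf_succ (by omega)]
    exact mul_ne_zero (one_sub_ne (by omega)) (ih (by omega))

/-- the summand -/
def tm (m l c i j k : ℤ) : Fq :=
  (-1 : Fq) ^ l * q ^ (2 * i * (c - j) + 2 * (k + 1) * l + 2 * m * (m - k)) *
    (qf i * qf j * qf (c + m) * qg m * qg l * qg (i - m) * qg (j - l) * qg c)

/-- the sum, without the delta factors -/
def core (b : ℕ) (c i j k : ℤ) : Fq :=
  ∑ m ∈ Finset.range (b + 1), tm m (b - m) c i j k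

lemma Scoef_eq (a b c i j k : ℕ) : Scoef a b c i j k =
    if i + j = a + b ∧ j + k = b + c then core b c i j k else 0 := by
  unfold Scoef core tm
  by_cases h1 : i + j = a + b <;> by_cases h2 : j + k = b + c <;> simp only [h1, h2, and_true, and_false, if_true, if_false, one_mul, zero_mul, mul_zero]
  apply Finset.sum_congr rfl
  intro m hm
  have hm : m ≤ b := by simpa [Nat.lt_succ_iff] using hm
  have : (-1 : Fq) ^ (b - m) = (-1 : Fq) ^ ((b : ℤ) - m) := by
    rw [← zpow_natCast]; push_cast [hm]; rfl
  rw [this]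
  simp only [qg, qf, div_eq_mul_inv, mul_inv]
  ring

lemma core_zero (b : ℕ) (c i j k : ℤ) (h : i + j < b) : core b c i j k = 0 := by
  unfold core
  apply Finset.sum_eq_zero
  intro m hm
  unfold tm
  by_cases h1 : i - m < 0
  · rw [qg_neg h1]; ring
  · rw [qg_neg (n := j - (b - m)) (by omega)]; ring

/-- telescoping base term -/
def bs (m l c i j k : ℤ) : Fq :=
  (-1 : Fq) ^ l * q ^ (2 * i * (c - j) + 2 * (k + 1) * l + 2 * m * (m - k)) *
    (qf i * qf j * qf (c + m) * qg m * qg l * qg (i + 1 - m) * qg (j + 1 - l) * qg c)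

/-- telescoping term -/
def bG (m l c i j k : ℤ) : Fq :=
  bs m l c i j k * (1 - q ^ (4 * m)) * (1 - q ^ (4 * (j + 1 - l)))

lemma neg_one_zpow_pred (l : ℤ) : (-1 : Fq) ^ (l - 1) = - (-1 : Fq) ^ l := by
  rw [zpow_sub₀ (by norm_num), zpow_one, div_neg, div_one]

lemma bG_succ (m l c i j k : ℤ) (hc : 0 ≤ c) (hm : 0 ≤ m) :
    bG (m + 1) (l - 1) c i j k = - q ^ (4 * (m - k)) * bs m l c i j k *
      (1 - q ^ (4 * (c + m + 1))) * (1 - q ^ (4 * l)) * (1 - q ^ (4 * (i + 1 - m))) := by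
  have h1 := qg_pred (m + 1)
  have h2 := qg_pred l
  have h3 := qg_pred (i + 1 - m)
  have h4 := qg_pred (j + 1 - (l - 1))
  have h5 := qf_succ (n := c + m) (by omega)
  rw [show m + 1 - 1 = m by ring] at h1
  rw [show j + 1 - (l - 1) - 1 = j + 1 - l by ring] at h4
  rw [show i + 1 - m - 1 = i + 1 - (m + 1) by ring] at h3
  rw [show c + m + 1 = c + (m + 1) by ring] at *
  have e : q ^ (2 * i * (c - j) + 2 * (k + 1) * (l - 1) + 2 * (m + 1) * (m + 1 - k))
     = q ^ (4 * (m - k)) * q ^ (2 * i * (c - j) + 2 * (k + 1) * l + 2 * m * (m - k)) := by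
    rw [← zpow_add₀ q_ne]; congr 1; ring
  unfold bG bs
  rw [h1, h4, h2, h3, h5, e, neg_one_zpow_pred]
  ring

lemma bG_sum (b : ℕ) (e : ℕ → Fq) (c i j k : ℤ)  :
    ∑ m ∈ Finset.range (b + 1), (e (m + 1) * bG ((m : ℤ) + 1) ((b : ℤ) - m - 1) c i j k
       - e m * bG (m : ℤ) ((b : ℤ) - m) c i j k) = 0 := by
  have := Finset.sum_range_sub (fun m : ℕ => e m * bG (m : ℤ) ((b : ℤ) - m) c i j k) (b + 1)
  have h0 : bG ((0 : ℕ) : ℤ) ((b : ℤ) - (0 : ℕ)) c i j k = 0 := by simp [bG]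
  have h1 : bG ((b + 1 : ℕ) : ℤ) ((b : ℤ) - (b + 1 : ℕ)) c i j k = 0 := by
    unfold bG bs
    rw [qg_neg (n := ((b : ℤ) - (b + 1 : ℕ))) (by push_cast; omega)]; ring
  simp only [h0, h1, mul_zero, sub_zero] at this
  rw [← this]
  apply Finset.sum_congr rfl
  intro m _
  push_cast
  rw [sub_sub]

/-- relation 1, reversed, termwise -/
lemma rel1_rev_term (m b c i j k : ℤ) (hm : 0 ≤ m) (hc : 0 ≤ c) (hi : 0 ≤ i) (hj : 0 ≤ j)
    (h : j + k = b + c) :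
    q ^ (2 * b) * tm m (b - m) c i j k - q ^ (2 * k) * tm m (b - m) c (i + 1) j k
      - q ^ (2 * i) * (1 - q ^ (4 * k)) * tm m (b - m) c i (j + 1) (k - 1)
    = q ^ (4 * k - 2 * b)  * bG (m + 1) (b - m - 1) c i j k - q ^ (4 * k - 2 * b) * bG m (b - m) c i j k := by
  rw [bG_succ _ _ _ _ _ _ hc hm]
  have h3 := qg_pred (i + 1 - m)
  have h4 := qg_pred (j + 1 - (b - m))
  rw [show i + 1 - m - 1 = i - m by ring] at h3
  rw [show j + 1 - (b - m) - 1 = j - (b - m) by ring] at h4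
  obtain rfl : c = j + k - b := by omega
  unfold bG tm bs
  rw [h3, h4, qf_succ hi, qf_succ hj]
  have e1 : 2 * (i + 1) * (j + k - b - j) + 2 * (k + 1) * (b - m) + 2 * m * (m - k) =
    (2 * i * (j + k - b - j) + 2 * (k + 1) * (b - m) + 2 * m * (m - k)) + (2 * k - 2 * b) := by ring
  have e2 : 2 * i * (j + k - b - (j + 1)) + 2 * (k - 1 + 1) * (b - m) + 2 * m * (m - (k - 1)) =
    (2 * i * (j + k - b - j) + 2 * (k + 1) * (b - m) + 2 * m * (m - k)) + (- 2 * i + 4 * m - 2 * b) := by ring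
  rw [e1, e2, zpow_add₀ q_ne _ (2 * k - 2 * b), zpow_add₀ q_ne _ (- 2 * i + 4 * m - 2 * b)]
  generalize q ^ (2 * i * (j + k - b - j) + 2 * (k + 1) * (b - m) + 2 * m * (m - k)) = E
  have p4 : ∀ n : ℤ, q ^ (4 * n) = (q ^ n) ^ 4 := fun n => by rw [mul_comm, zpow_mul]; norm_cast
  have p2 : ∀ n : ℤ, q ^ (2 * n) = (q ^ n) ^ 2 := fun n => by rw [mul_comm, zpow_mul]; norm_cast
  simp only [p4, p2, zpow_sub₀ q_ne, zpow_add₀ q_ne, zpow_one, neg_mul, zpow_neg]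
  have hI : q ^ i ≠ 0 := zpow_ne_zero _ q_ne
  have hJ : q ^ j ≠ 0 := zpow_ne_zero _ q_ne
  have hK : q ^ k ≠ 0 := zpow_ne_zero _ q_ne
  have hB : q ^ b ≠ 0 := zpow_ne_zero _ q_ne
  have hM : q ^ m ≠ 0 := zpow_ne_zero _ q_ne
  have hq := q_ne
  generalize q ^ i = I at *
  generalize q ^ j = J at *
  generalize q ^ k = K at *
  generalize q ^ b = B at *
  generalize q ^ m = M at *
  generalize (-1 : Fq) ^ (b - m) = sg at *
  generalize q = Q at *
  field_simp
  ring

lemma p4 (n : ℤ) : q ^ (4 * n) = (q ^ n) ^ 4 := by rw [mul_comm, zpow_mul]; norm_cast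
lemma p2 (n : ℤ) : q ^ (2 * n) = (q ^ n) ^ 2 := by rw [mul_comm, zpow_mul]; norm_cast

lemma rel1_rev (b : ℕ) (c i j k : ℤ) (hc : 0 ≤ c) (hi : 0 ≤ i) (hj : 0 ≤ j)
    (h : j + k = b + c) :
    q ^ (2 * (b : ℤ)) * core b c i j k = q ^ (2 * k) * core b c (i + 1) j k
      + q ^ (2 * i) * (1 - q ^ (4 * k)) * core b c i (j + 1) (k - 1) := by
  have := bG_sum b (fun _ => q ^ (4 * k - 2 * (b : ℤ))) c i j k
  rw [Finset.sum_congr rfl (fun (m : ℕ) _ =>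
    (rel1_rev_term m b c i j k (by omega) hc hi hj h).symm)] at this
  simp only [Finset.sum_sub_distrib, ← Finset.mul_sum] at this
  unfold core
  linear_combination this

/-- relation 3, reversed, termwise -/
lemma rel3_rev_term (m b c i j k : ℤ) (hm : 0 ≤ m) (hc : 0 ≤ c) (hi : 0 ≤ i) (hj : 0 ≤ j)
    (h : j + k + 1 = b + c) :
    tm m (b - m) c (i + 1) j (k + 1) - q ^ (2 * (1 + i + k)) * tm m (b - m) c i (j + 1) k
      - tm m (b - 1 - m) c i j k
    = (- q ^ (2 * (k + 1) - 4 * (m + 1)))  * bG (m + 1) (b - m - 1) c i j k -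
      (- q ^ (2 * (k + 1) - 4 * m)) * bG m (b - m) c i j k := by
  rw [bG_succ _ _ _ _ _ _ hc hm]
  have h3 := qg_pred (i + 1 - m)
  have h4 := qg_pred (j + 1 - (b - m))
  have h5 := qg_pred (b - m)
  rw [show i + 1 - m - 1 = i - m by ring] at h3
  rw [show j + 1 - (b - m) - 1 = j - (b - m) by ring] at h4
  rw [show b - m - 1 = b - 1 - m by ring] at h5
  obtain rfl : c = j + k + 1 - b := by omega
  unfold bG tm bs
  rw [show j - (b - 1 - m) = j + 1 - (b - m) by ring]
  rw [h3, h4, h5, qf_succ hi, qf_succ hj]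
  have e1 : 2 * (i + 1) * (j + k + 1 - b - j) + 2 * (k + 1 + 1) * (b - m) + 2 * m * (m - (k + 1)) =
    (2 * i * (j + k + 1 - b - j) + 2 * (k + 1) * (b - m) + 2 * m * (m - k)) + (2 * k + 2 - 4 * m) := by ring
  have e2 : 2 * i * (j + k + 1 - b - (j + 1)) + 2 * (k + 1) * (b - m) + 2 * m * (m - k) =
    (2 * i * (j + k + 1 - b - j) + 2 * (k + 1) * (b - m) + 2 * m * (m - k)) + (- 2 * i) := by ring
  have e3 : 2 * i * (j + k + 1 - b - j) + 2 * (k + 1) * (b - 1 - m) + 2 * m * (m - k) =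
    (2 * i * (j + k + 1 - b - j) + 2 * (k + 1) * (b - m) + 2 * m * (m - k)) + (- 2 * (k + 1)) := by ring
  have es : (-1 : Fq) ^ (b - 1 - m) = - (-1 : Fq) ^ (b - m) := by
    rw [← neg_one_zpow_pred]; congr 1; ring
  rw [e1, e2, e3, es, zpow_add₀ q_ne _ (2 * k + 2 - 4 * m), zpow_add₀ q_ne _ (- 2 * i),
    zpow_add₀ q_ne _ (- 2 * (k + 1))]
  generalize q ^ (2 * i * (j + k + 1 - b - j) + 2 * (k + 1) * (b - m) + 2 * m * (m - k)) = E
  have hz : q ^ (2 : ℤ) = q ^ 2 := by norm_cast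
  simp only [p4, p2, zpow_sub₀ q_ne, zpow_add₀ q_ne, zpow_one, neg_mul, zpow_neg, hz]
  have hI : q ^ i ≠ 0 := zpow_ne_zero _ q_ne
  have hJ : q ^ j ≠ 0 := zpow_ne_zero _ q_ne
  have hK : q ^ k ≠ 0 := zpow_ne_zero _ q_ne
  have hB : q ^ b ≠ 0 := zpow_ne_zero _ q_ne
  have hM : q ^ m ≠ 0 := zpow_ne_zero _ q_ne
  have hq := q_ne
  generalize q ^ i = I at *
  generalize q ^ j = J at *
  generalize q ^ k = K at *
  generalize q ^ b = B at *
  generalize q ^ m = M at *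
  generalize (-1 : Fq) ^ (b - m) = sg at *
  generalize q = Q at *
  field_simp
  ring

/-- core with `b` lowered by one, zero when `b = 0` -/
def corep (b : ℕ) (c i j k : ℤ) : Fq :=
  ∑ m ∈ Finset.range b, tm m ((b : ℤ) - 1 - m) c i j k

lemma corep_zero (c i j k : ℤ) : corep 0 c i j k = 0 := by simp [corep]
lemma corep_succ (b : ℕ) (c i j k : ℤ) : corep (b + 1) c i j k = core b c i j k := by
  simp [corep, core]

lemma rel3_rev (b : ℕ) (c i j k : ℤ) (hc : 0 ≤ c) (hi : 0 ≤ i) (hj : 0 ≤ j)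
    (h : j + k + 1 = b + c) :
    core b c (i + 1) j (k + 1) =
      q ^ (2 * (1 + i + k)) * core b c i (j + 1) k + corep b c i j k := by
  have := bG_sum b (fun m => - q ^ (2 * (k + 1) - 4 * (m : ℤ))) c i j k
  simp only [Nat.cast_add, Nat.cast_one] at this
  rw [Finset.sum_congr rfl (fun (m : ℕ) _ =>
    (rel3_rev_term m b c i j k (by omega) hc hi hj h).symm)] at this
  simp only [Finset.sum_sub_distrib, ← Finset.mul_sum] at this
  rw [Finset.sum_range_succ (fun m : ℕ => tm m ((b : ℤ) - 1 - m) c i j k)] at this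
  have h0 : tm b ((b : ℤ) - 1 - b) c i j k = 0 := by
    unfold tm
    rw [qg_neg (n := (b : ℤ) - 1 - b) (by omega)]; ring
  rw [h0] at this
  unfold core corep
  linear_combination this

set_option maxHeartbeats 1000000 in
lemma rel1_term (m b c i j k : ℤ) (hc : 0 ≤ c) (hi : 0 ≤ i)
    (h : j + k = b + c) :
    q ^ (2 * j) * tm m (b - m) c (i + 1) j k = q ^ (2 * c) * tm m (b - m) c i j k
      + q ^ (2 * (i + 1 + j - b)) * (1 - q ^ (4 * (c + 1))) *
         tm (m - 1) (b - m) (c + 1) i j k := by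
  have h3 := qg_pred (i + 1 - m)
  have h4 := qg_pred m
  have h5 := qg_pred (c + 1)
  rw [show i + 1 - m - 1 = i - m by ring] at h3
  rw [show c + 1 - 1 = c by ring] at h5
  unfold tm
  rw [show c + 1 + (m - 1) = c + m by ring, show i - (m - 1) = i + 1 - m by ring]
  rw [h3, h4, h5, qf_succ hi]
  obtain rfl : c = j + k - b := by omega
  have e1 : 2 * (i + 1) * (j + k - b - j) + 2 * (k + 1) * (b - m) + 2 * m * (m - k) =
    (2 * i * (j + k - b - j) + 2 * (k + 1) * (b - m) + 2 * m * (m - k)) + (2 * k - 2 * b) := by ring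
  have e2 : 2 * i * (j + k - b + 1 - j) + 2 * (k + 1) * (b - m) + 2 * (m - 1) * (m - 1 - k) =
    (2 * i * (j + k - b - j) + 2 * (k + 1) * (b - m) + 2 * m * (m - k)) + (2 * i - 4 * m + 2 * (k + 1)) := by ring
  rw [e1, e2, zpow_add₀ q_ne _ (2 * k - 2 * b), zpow_add₀ q_ne _ (2 * i - 4 * m + 2 * (k + 1))]
  generalize q ^ (2 * i * (j + k - b - j) + 2 * (k + 1) * (b - m) + 2 * m * (m - k)) = E
  simp only [p4, p2, zpow_sub₀ q_ne, zpow_add₀ q_ne, zpow_one, neg_mul, zpow_neg]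
  have hI : q ^ i ≠ 0 := zpow_ne_zero _ q_ne
  have hJ : q ^ j ≠ 0 := zpow_ne_zero _ q_ne
  have hK : q ^ k ≠ 0 := zpow_ne_zero _ q_ne
  have hB : q ^ b ≠ 0 := zpow_ne_zero _ q_ne
  have hM : q ^ m ≠ 0 := zpow_ne_zero _ q_ne
  have hq := q_ne
  generalize q ^ i = I at *
  generalize q ^ j = J at *
  generalize q ^ k = K at *
  generalize q ^ b = B at *
  generalize q ^ m = M at *
  generalize (-1 : Fq) ^ (b - m) = sg at *
  generalize q = Q at *
  field_simp
  ring

lemma rel1 (b : ℕ) (c i j k : ℤ) (hc : 0 ≤ c) (hi : 0 ≤ i)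
    (h : j + k = b + c) :
    q ^ (2 * j) * core b c (i + 1) j k = q ^ (2 * c) * core b c i j k
      + q ^ (2 * (i + 1 + j - b)) * (1 - q ^ (4 * (c + 1))) * corep b (c + 1) i j k := by
  have h0 : tm ((0 : ℕ) - 1) ((b : ℤ) - (0 : ℕ)) (c + 1) i j k = 0 := by
    unfold tm
    rw [qg_neg (n := ((0 : ℕ) : ℤ) - 1) (by simp)]; ring
  have h1 : corep b (c + 1) i j k =
      ∑ m ∈ Finset.range (b + 1), tm ((m : ℤ) - 1) (b - m) (c + 1) i j k := by
    rw [Finset.sum_range_succ', h0, add_zero]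
    unfold corep
    apply Finset.sum_congr rfl
    intro m _
    push_cast
    congr 1 <;> ring
  rw [h1]
  unfold core
  rw [Finset.mul_sum, Finset.mul_sum, Finset.mul_sum, ← Finset.sum_add_distrib]
  exact Finset.sum_congr rfl fun m _ => rel1_term m b c i j k hc hi h

lemma core_i0 (b : ℕ) (c j k : ℤ) (hc : 0 ≤ c) : core b c 0 j k =
    (-1 : Fq) ^ (b : ℤ) * q ^ (2 * (k + 1) * b) * (qf j * qg b * qg (j - b)) := by
  unfold core
  rw [Finset.sum_range_succ', Finset.sum_eq_zero, zero_add]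
  · unfold tm
    have : qf c * qg c = 1 := mul_inv_cancel₀ (qf_ne hc)
    simp only [Nat.cast_zero, sub_zero, qg_zero, qf_zero, add_zero, mul_zero, zero_mul, zero_add]
    linear_combination ((-1 : Fq) ^ (b : ℤ) * q ^ (2 * (k + 1) * b) * (qf j * qg b * qg (j - b))) * this
  · intro m _
    unfold tm
    rw [qg_neg (n := 0 - ((m + 1 : ℕ) : ℤ)) (by omega)]; ring

lemma rel3_0 (b : ℕ) (j k : ℤ) (c c' : ℤ) (hc : 0 ≤ c) (hc' : 0 ≤ c') (hj : 0 ≤ j)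
    (h : j + 1 + k = b + c) :
    core b c 0 (j + 1) k = core b c' 0 j k
      - q ^ (2 * (1 + (j + 1 - b) + c)) * corep b c 0 j k := by
  have h2 : corep b c 0 j k = (-1 : Fq) ^ ((b : ℤ) - 1) * q ^ (2 * (k + 1) * ((b : ℤ) - 1)) *
      (qf j * qg ((b : ℤ) - 1) * qg (j - ((b : ℤ) - 1))) := by
    cases b with
    | zero => rw [corep_zero, qg_neg (n := ((0 : ℕ) : ℤ) - 1) (by simp)]; ring
    | succ b => rw [corep_succ, core_i0 _ _ _ _ hc]; push_cast; simp
  rw [h2, core_i0 _ _ _ _ hc, core_i0 _ _ _ _ hc', neg_one_zpow_pred, qg_pred, qf_succ hj]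
  have h3 := qg_pred (j + 1 - b)
  rw [show j + 1 - (b : ℤ) - 1 = j - b by ring] at h3
  rw [show j - ((b : ℤ) - 1) = j + 1 - b by ring, h3]
  obtain rfl : c = j + 1 + k - b := by omega
  have e1 : q ^ (2 * (1 + (j + 1 - (b : ℤ)) + (j + 1 + k - b))) * q ^ (2 * (k + 1) * ((b : ℤ) - 1)) 
     = q ^ (4 * (j + 1 - (b : ℤ))) * q ^ (2 * (k + 1) * (b : ℤ)) := by
    rw [← zpow_add₀ q_ne, ← zpow_add₀ q_ne]; congr 1; ring
  have e2 : q ^ (4 * (j + 1)) = q ^ (4 * (j + 1 - (b : ℤ))) * q ^ (4 * (b : ℤ)) := by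
    rw [← zpow_add₀ q_ne]; congr 1; ring
  rw [e2]
  linear_combination (-(-1 : Fq) ^ (b : ℤ) * (qf j * ((1 - q ^ (4 * (b : ℤ))) * qg b) * qg (j + 1 - b))) * e1

/-- core restricted by the conservation laws; `Scoef` at lowered `b` -/
lemma Scoef_pred_b (a b c i j k : ℕ) (hb : b ≠ 0) : Scoef a (b - 1) c i j k =
    if i + j + 1 = a + b ∧ j + k + 1 = b + c then corep b c i j k else 0 := by
  obtain ⟨b, rfl⟩ := Nat.exists_eq_succ_of_ne_zero hb
  simp only [Nat.succ_eq_add_one, Nat.add_sub_cancel, Scoef_eq, corep_succ]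
  congr 1
  apply propext
  omega

lemma SR1 (a b c i j k : ℕ) : q ^ (2 * (j : ℤ)) * Scoef a b c (i + 1) j k =
    (if a = 0 then 0 else q ^ (2 * (c : ℤ)) * Scoef (a - 1) b c i j k) +
    (if b = 0 then 0 else q ^ (2 * (a : ℤ)) * (1 - q ^ (4 * ((c : ℤ) + 1))) *
      Scoef a (b - 1) (c + 1) i j k) := by
  have hA : (if a = 0 then 0 else q ^ (2 * (c : ℤ)) * Scoef (a - 1) b c i j k) =
      if i + 1 + j = a + b ∧ j + k = b + c then q ^ (2 * (c : ℤ)) * core b c i j k else 0 := by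
    by_cases ha : a = 0
    · subst ha
      simp only [if_true]
      split_ifs with h
      · rw [core_zero _ _ _ _ _ (by omega), mul_zero]
      · rfl
    · rw [if_neg ha, Scoef_eq]
      by_cases h : i + 1 + j = a + b ∧ j + k = b + c
      · rw [if_pos h, if_pos (by omega)]
      · rw [if_neg h, if_neg (by omega), mul_zero]
  have hB : (if b = 0 then 0 else q ^ (2 * (a : ℤ)) * (1 - q ^ (4 * ((c : ℤ) + 1))) *
      Scoef a (b - 1) (c + 1) i j k) =
      if i + 1 + j = a + b ∧ j + k = b + c then
        q ^ (2 * (a : ℤ)) * (1 - q ^ (4 * ((c : ℤ) + 1))) * corep b (c + 1) i j k else 0 := by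
    by_cases hb : b = 0
    · subst hb; simp [corep_zero]
    · rw [if_neg hb, Scoef_pred_b _ _ _ _ _ _ hb]
      by_cases h : i + 1 + j = a + b ∧ j + k = b + c
      · rw [if_pos h, if_pos (by omega)]; push_cast; rfl
      · rw [if_neg h, if_neg (by omega), mul_zero]
  rw [hA, hB, Scoef_eq]
  split_ifs with h
  · have := rel1 b c i j k (by omega) (by omega) (by omega)
    rw [show (i : ℤ) + 1 + j - b = a by omega] at this
    push_cast
    exact this
  · simp

lemma SR1_rev (a b c i j k : ℕ) :
    (if a = 0 then 0 else q ^ (2 * (b : ℤ)) * Scoef (a - 1) b c i j k) =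
    q ^ (2 * (k : ℤ)) * Scoef a b c (i + 1) j k +
    q ^ (2 * (i : ℤ)) * (1 - q ^ (4 * (k : ℤ))) * Scoef a b c i (j + 1) (k - 1) := by
  have hA : (if a = 0 then 0 else q ^ (2 * (b : ℤ)) * Scoef (a - 1) b c i j k) =
      if i + 1 + j = a + b ∧ j + k = b + c then q ^ (2 * (b : ℤ)) * core b c i j k else 0 := by
    by_cases ha : a = 0
    · subst ha
      simp only [if_true]
      split_ifs with h
      · rw [core_zero _ _ _ _ _ (by omega), mul_zero]
      · rfl
    · rw [if_neg ha, Scoef_eq]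
      by_cases h : i + 1 + j = a + b ∧ j + k = b + c
      · rw [if_pos h, if_pos (by omega)]
      · rw [if_neg h, if_neg (by omega), mul_zero]
  have hB : q ^ (2 * (i : ℤ)) * (1 - q ^ (4 * (k : ℤ))) * Scoef a b c i (j + 1) (k - 1) =
      if i + 1 + j = a + b ∧ j + k = b + c then
        q ^ (2 * (i : ℤ)) * (1 - q ^ (4 * (k : ℤ))) * core b c i (j + 1) (k - 1) else 0 := by
    by_cases hk : k = 0
    · subst hk; simp
    · rw [Scoef_eq]
      by_cases h : i + 1 + j = a + b ∧ j + k = b + c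
      · rw [if_pos h, if_pos (by omega), Nat.cast_sub (by omega)]; push_cast; rfl
      · rw [if_neg h, if_neg (by omega), mul_zero]
  rw [hA, hB, Scoef_eq]
  split_ifs with h
  · have := rel1_rev b c i j k (by omega) (by omega) (by omega) (by omega)
    push_cast
    exact this
  · simp

lemma SR3_rev (a b c i j k : ℕ) :
    Scoef a b c (i + 1) j (k + 1) - q ^ (2 * (1 + (i : ℤ) + k)) * Scoef a b c i (j + 1) k =
    (if b = 0 then 0 else Scoef a (b - 1) c i j k) := by
  have hB : (if b = 0 then 0 else Scoef a (b - 1) c i j k) =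
      if i + 1 + j = a + b ∧ j + (k + 1) = b + c then corep b c i j k else 0 := by
    by_cases hb : b = 0
    · subst hb; simp [corep_zero]
    · rw [if_neg hb, Scoef_pred_b _ _ _ _ _ _ hb]
      by_cases h : i + 1 + j = a + b ∧ j + (k + 1) = b + c
      · rw [if_pos h, if_pos (by omega)]
      · rw [if_neg h, if_neg (by omega)]
  rw [hB, Scoef_eq, Scoef_eq]
  by_cases h : i + 1 + j = a + b ∧ j + (k + 1) = b + c
  · rw [if_pos h, if_pos h, if_pos (by omega)]
    have := rel3_rev b c i j k (by omega) (by omega) (by omega) (by omega)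
    push_cast
    rw [this]; ring
  · rw [if_neg h, if_neg h, if_neg (by omega)]; simp

lemma SR3 (a b c j k : ℕ) : Scoef a b c 0 (j + 1) k =
    (if a = 0 ∨ c = 0 then 0 else Scoef (a - 1) b (c - 1) 0 j k) -
    (if b = 0 then 0 else q ^ (2 * (1 + (a : ℤ) + c)) * Scoef a (b - 1) c 0 j k) := by
  have hA : (if a = 0 ∨ c = 0 then 0 else Scoef (a - 1) b (c - 1) 0 j k) =
      if 0 + (j + 1) = a + b ∧ j + 1 + k = b + c then core b (c - 1 : ℕ) 0 j k else 0 := by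
    by_cases ha : a = 0 ∨ c = 0
    · rw [if_pos ha]
      split_ifs with h
      · rw [core_zero _ _ _ _ _ (by omega)]
      · rfl
    · rw [if_neg ha, Scoef_eq]
      by_cases h : 0 + (j + 1) = a + b ∧ j + 1 + k = b + c
      · rw [if_pos h, if_pos (by omega)]; rfl
      · rw [if_neg h, if_neg (by omega)]
  have hB : (if b = 0 then 0 else q ^ (2 * (1 + (a : ℤ) + c)) * Scoef a (b - 1) c 0 j k) =
      if 0 + (j + 1) = a + b ∧ j + 1 + k = b + c then
        q ^ (2 * (1 + (a : ℤ) + c)) * corep b c 0 j k else 0 := by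
    by_cases hb : b = 0
    · subst hb; simp [corep_zero]
    · rw [if_neg hb, Scoef_pred_b _ _ _ _ _ _ hb]
      by_cases h : 0 + (j + 1) = a + b ∧ j + 1 + k = b + c
      · rw [if_pos h, if_pos (by omega)]; rfl
      · rw [if_neg h, if_neg (by omega), mul_zero]
  rw [hA, hB, Scoef_eq]
  split_ifs with h
  · have := rel3_0 b j k c (c - 1 : ℕ) (by omega) (by omega) (by omega) (by omega)
    rw [show (j : ℤ) + 1 - b = a by omega] at this
    push_cast at this ⊢
    exact this
  · simp

/-- the triple Fock space -/
abbrev V3 : Type := (ℕ × ℕ × ℕ) →₀ Fq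

def ev (i j k : ℕ) : V3 := Finsupp.single (i, j, k) 1

/-- the linear operator given by images of basis vectors -/
def opV (v : ℕ → ℕ → ℕ → V3) : V3 →ₗ[Fq] V3 :=
  Finsupp.linearCombination Fq fun n : ℕ × ℕ × ℕ => v n.1 n.2.1 n.2.2

lemma opV_ev (v : ℕ → ℕ → ℕ → V3) (i j k : ℕ) : opV v (ev i j k) = v i j k := by
  simp [opV, ev]

lemma opV_ext {f g : V3 →ₗ[Fq] V3} (h : ∀ i j k, f (ev i j k) = g (ev i j k)) : f = g := by
  apply Finsupp.lhom_ext'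
  rintro ⟨i, j, k⟩
  ext1
  exact h i j k

lemma ev_apply (i j k a b c : ℕ) : ev i j k (a, b, c) = if i = a ∧ j = b ∧ k = c then 1 else 0 := by
  simp [ev, Finsupp.single_apply]

def Sv (i j k : ℕ) : V3 :=
  Finsupp.onFinset (Finset.range (i + j + 1) ×ˢ Finset.range (i + j + 1) ×ˢ Finset.range (j + k + 1))
    (fun n => Scoef n.1 n.2.1 n.2.2 i j k) (by
      rintro ⟨a, b, c⟩ h
      simp only [Scoef_eq] at h
      have hh : i + j = a + b ∧ j + k = b + c := by
        by_contra hh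
        exact h (if_neg hh)
      simp only [Finset.mem_product, Finset.mem_range]
      omega)

lemma Sv_apply (i j k a b c : ℕ) : Sv i j k (a, b, c) = Scoef a b c i j k := rfl

def SS : V3 →ₗ[Fq] V3 := opV Sv
def X1 : V3 →ₗ[Fq] V3 := opV fun i j k => q ^ (2 * (j : ℤ)) • ev (i + 1) j k
def Y1 : V3 →ₗ[Fq] V3 := opV fun i j k => q ^ (2 * (k : ℤ)) • ev (i + 1) j k +
  (q ^ (2 * (i : ℤ)) * (1 - q ^ (4 * (k : ℤ)))) • ev i (j + 1) (k - 1)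
def X3 : V3 →ₗ[Fq] V3 := opV fun i j k => ev i (j + 1) k
def Y3 : V3 →ₗ[Fq] V3 := opV fun i j k => ev (i + 1) j (k + 1) -
  q ^ (2 * (1 + (i : ℤ) + k)) • ev i (j + 1) k

lemma coord_ext (f : V3 →ₗ[Fq] V3) (a b c : ℕ) (g : V3 →ₗ[Fq] Fq)
    (h : ∀ i j k, f (ev i j k) (a, b, c) = g (ev i j k)) (v : V3) : f v (a, b, c) = g v := by
  have : (Finsupp.lapply (a, b, c)) ∘ₗ f = g := by
    apply Finsupp.lhom_ext'
    rintro ⟨i, j, k⟩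
    ext1
    exact h i j k
  exact LinearMap.congr_fun this v

lemma X1_apply (v : V3) (a b c : ℕ) : X1 v (a, b, c) =
    if a = 0 then 0 else q ^ (2 * (b : ℤ)) * v (a - 1, b, c) := by
  have := coord_ext X1 a b c (if a = 0 then 0 else q ^ (2 * (b : ℤ)) • Finsupp.lapply (a - 1, b, c))
    (by
      intro i j k
      rcases a with _ | a
      · simp [X1, opV_ev, ev_apply]
      · simp only [X1, opV_ev, Finsupp.smul_apply, ev_apply, smul_eq_mul, Nat.add_sub_cancel,
          Nat.add_right_cancel_iff, if_neg (Nat.succ_ne_zero a), LinearMap.smul_apply, Finsupp.lapply_apply]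
        split_ifs with h
        · rw [h.2.1]
        · simp) v
  rw [this]
  split_ifs <;> simp

lemma X3_apply (v : V3) (a b c : ℕ) : X3 v (a, b, c) =
    if b = 0 then 0 else v (a, b - 1, c) := by
  have := coord_ext X3 a b c (if b = 0 then 0 else Finsupp.lapply (a, b - 1, c))
    (by
      intro i j k
      rcases b with _ | b
      · simp [X3, opV_ev, ev_apply]
      · simp only [X3, opV_ev, ev_apply, Nat.add_sub_cancel,
          Nat.add_right_cancel_iff, if_neg (Nat.succ_ne_zero b), Finsupp.lapply_apply]) v
  rw [this]
  split_ifs <;> simp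

lemma Y1_apply (v : V3) (a b c : ℕ) : Y1 v (a, b, c) =
    (if a = 0 then 0 else q ^ (2 * (c : ℤ)) * v (a - 1, b, c)) +
    (if b = 0 then 0 else q ^ (2 * (a : ℤ)) * (1 - q ^ (4 * ((c : ℤ) + 1))) *
      v (a, b - 1, c + 1)) := by
  have := coord_ext Y1 a b c ((if a = 0 then 0 else q ^ (2 * (c : ℤ)) • Finsupp.lapply (a - 1, b, c)) +
      (if b = 0 then 0 else (q ^ (2 * (a : ℤ)) * (1 - q ^ (4 * ((c : ℤ) + 1)))) •
        Finsupp.lapply (a, b - 1, c + 1)))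
    (by
      intro i j k
      simp only [Y1, opV_ev, Finsupp.add_apply, LinearMap.add_apply]
      congr 1
      · rcases a with _ | a
        · simp [ev_apply]
        · simp only [Finsupp.smul_apply, ev_apply, smul_eq_mul, Nat.add_sub_cancel,
            Nat.add_right_cancel_iff, if_neg (Nat.succ_ne_zero a), LinearMap.smul_apply, Finsupp.lapply_apply]
          split_ifs with h
          · rw [h.2.2]
          · simp
      · rcases b with _ | b
        · simp [ev_apply]
        · rcases k with _ | k
          · simp [ev_apply]
          · simp only [Finsupp.smul_apply, ev_apply, smul_eq_mul, Nat.add_sub_cancel,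
              Nat.add_right_cancel_iff, if_neg (Nat.succ_ne_zero b), LinearMap.smul_apply, Finsupp.lapply_apply]
            split_ifs with h
            · rw [h.1, h.2.2]; push_cast; rfl
            · simp) v
  rw [this]
  split_ifs <;> simp

lemma Y3_apply (v : V3) (a b c : ℕ) : Y3 v (a, b, c) =
    (if a = 0 ∨ c = 0 then 0 else v (a - 1, b, c - 1)) -
    (if b = 0 then 0 else q ^ (2 * (1 + (a : ℤ) + c)) * v (a, b - 1, c)) := by
  have := coord_ext Y3 a b c ((if a = 0 ∨ c = 0 then 0 else Finsupp.lapply (a - 1, b, c - 1)) -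
      (if b = 0 then 0 else (q ^ (2 * (1 + (a : ℤ) + c))) • Finsupp.lapply (a, b - 1, c)))
    (by
      intro i j k
      simp only [Y3, opV_ev, Finsupp.sub_apply, LinearMap.sub_apply]
      congr 1
      · rcases a with _ | a
        · simp [ev_apply]
        · rcases c with _ | c
          · simp [ev_apply]
          · simp [ev_apply]
      · rcases b with _ | b
        · simp [ev_apply]
        · simp only [Finsupp.smul_apply, ev_apply, smul_eq_mul, Nat.add_sub_cancel,
            Nat.add_right_cancel_iff, if_neg (Nat.succ_ne_zero b), LinearMap.smul_apply, Finsupp.lapply_apply]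
          split_ifs with h
          · rw [h.1, h.2.2]
          · simp) v
  rw [this]
  split_ifs <;> simp

lemma SX1 (i j k : ℕ) : SS (X1 (ev i j k)) = Y1 (SS (ev i j k)) := by
  ext ⟨a, b, c⟩
  simp only [Y1_apply, X1, SS, opV_ev, map_smul, Finsupp.smul_apply, Sv_apply, smul_eq_mul, SR1]

lemma XS1 : X1 ∘ₗ SS = SS ∘ₗ Y1 := by
  apply opV_ext
  intro i j k
  ext ⟨a, b, c⟩
  simp only [LinearMap.comp_apply, X1_apply, Y1, SS, opV_ev, map_smul, map_add,
    Finsupp.smul_apply, Finsupp.add_apply, Sv_apply, smul_eq_mul, SR1_rev]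

lemma XS3 : X3 ∘ₗ SS = SS ∘ₗ Y3 := by
  apply opV_ext
  intro i j k
  ext ⟨a, b, c⟩
  simp only [LinearMap.comp_apply, X3_apply, Y3, SS, opV_ev, map_smul, map_sub,
    Finsupp.smul_apply, Finsupp.sub_apply, Sv_apply, smul_eq_mul, SR3_rev]

lemma SX3 (j k : ℕ) : SS (X3 (ev 0 j k)) = Y3 (SS (ev 0 j k)) := by
  ext ⟨a, b, c⟩
  simp only [Y3_apply, X3, SS, opV_ev, Sv_apply, SR3]

lemma SS_00 (k : ℕ) : SS (ev 0 0 k) = ev 0 0 k := by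
  ext ⟨a, b, c⟩
  rw [SS, opV_ev, Sv_apply, Scoef_eq, ev_apply]
  by_cases h : 0 = a ∧ 0 = b ∧ k = c
  · obtain ⟨rfl, rfl, rfl⟩ := h
    rw [if_pos (by simp), if_pos (by simp)]
    push_cast
    rw [core_i0 _ _ _ _ (by omega)]
    simp [qf_zero, qg_zero]
  · rw [if_neg h, if_neg (by omega)]

lemma SS_0 (j k : ℕ) : SS (SS (ev 0 j k)) = ev 0 j k := by
  induction j with
  | zero => rw [SS_00, SS_00]
  | succ j ih =>
    have h : ev 0 (j + 1) k = X3 (ev 0 j k) := by rw [X3, opV_ev]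
    have h2 := LinearMap.congr_fun XS3 (SS (ev 0 j k))
    simp only [LinearMap.comp_apply] at h2
    rw [h, SX3, ← h2, ih]

lemma SS_all (i j k : ℕ) : SS (SS (ev i j k)) = ev i j k := by
  induction i with
  | zero => exact SS_0 j k
  | succ i ih =>
    have h2 := LinearMap.congr_fun XS1 (SS (ev i j k))
    simp only [LinearMap.comp_apply] at h2
    have h3 : SS (SS (X1 (ev i j k))) = X1 (ev i j k) := by
      rw [SX1, ← h2, ih]
    rw [X1, opV_ev, map_smul, map_smul] at h3
    exact smul_right_injective _ (zpow_ne_zero _ q_ne) h3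

/-- 𝒮 is an involution. -/
theorem Scoef_involution :
    ∀ a b c i j k : ℕ,
      (∑ᶠ x : ℕ, ∑ᶠ y : ℕ, ∑ᶠ z : ℕ, Scoef a b c x y z * Scoef x y z i j k)
        = if a = i ∧ b = j ∧ c = k then 1 else 0 := by
  intro a b c i j k
  have h := DFunLike.congr_fun (SS_all i j k) (a, b, c)
  have hs : SS (ev i j k) = Sv i j k := opV_ev _ _ _ _
  rw [hs, ev_apply] at h
  have hsub : Function.support (fun n : ℕ × ℕ × ℕ =>
      Scoef a b c n.1 n.2.1 n.2.2 * Scoef n.1 n.2.1 n.2.2 i j k) ⊆ ↑(Sv i j k).support := by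
    rintro ⟨x, y, z⟩ hn
    simp only [Function.mem_support] at hn
    simp only [Finset.mem_coe, Finsupp.mem_support_iff, Sv_apply]
    exact right_ne_zero_of_mul hn
  have hfin := (Finset.finite_toSet (Sv i j k).support).subset hsub
  have e1 := finsum_curry _ hfin
  have e2 : ∀ x : ℕ, (∑ᶠ n : ℕ × ℕ, Scoef a b c x n.1 n.2 * Scoef x n.1 n.2 i j k) =
      ∑ᶠ y : ℕ, ∑ᶠ z : ℕ, Scoef a b c x y z * Scoef x y z i j k := fun x => by
    apply finsum_curry
    exact hfin.preimage (f := fun n : ℕ × ℕ => (x, n)) (fun _ _ _ _ h => by simpa using h)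
  simp only [e2] at e1
  rw [← e1, finsum_eq_sum_of_support_subset _ hsub]
  rw [show (if a = i ∧ b = j ∧ c = k then (1 : Fq) else 0) =
    if i = a ∧ j = b ∧ k = c then 1 else 0 by simp only [eq_comm], ← h]
  rw [SS, opV, Finsupp.linearCombination_apply, Finsupp.sum, Finsupp.finsetSum_apply]
  apply Finset.sum_congr rfl
  rintro ⟨x, y, z⟩ _
  simp only [Finsupp.smul_apply, Sv_apply, smul_eq_mul]
  ring
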